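/- Fix α with 1/2 < α < 1 and let s₁ > (1−α)/2. Then there exists C > 0 such that for every μ ∈ ℤ and all nonnegative sequences ω⁽¹⁾, ω⁽²⁾, ω⁽³⁾ : ℤ → [0,∞): ( Σ_{n ∈ ℤ} ⟨n⟩^{2s₁} ( Σ_{(n₁,n₂,n₃) ∈ Γ_n^N, |Φ − μ| < 1} ω⁽¹⁾_{n₁} ω⁽²⁾_{n₂} ω⁽³⁾_{n₃} )² )^{1/2} ≤ C ∏_{j=1}^{3} ‖ω⁽ʲ⁾‖_{ℓ²_{s₁}}. -/

import Mathlib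

open scoped ENNReal NNReal

/-- `⟨n⟩ = (1+n²)^{1/2}`. -/
noncomputable def jbZ (n : ℤ) : ℝ := Real.sqrt (1 + (n : ℝ) ^ 2)

/-- The weighted `ℓ²_s(ℤ)` norm (valued in `[0,∞]`). -/
noncomputable def l2sZ (s : ℝ) (ω : ℤ → ℝ≥0) : ℝ≥0∞ :=
  (∑' n : ℤ, ENNReal.ofReal (jbZ n ^ (2 * s)) * ((ω n : ℝ≥0∞)) ^ 2) ^ (1/2 : ℝ)

/-- `Φ = |n|^{2α} - |n₁|^{2α} + |n₂|^{2α} - |n₃|^{2α}`. -/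
noncomputable def PhiFrac (α : ℝ) (n n₁ n₂ n₃ : ℤ) : ℝ :=
  |(n : ℝ)| ^ (2 * α) - |(n₁ : ℝ)| ^ (2 * α) + |(n₂ : ℝ)| ^ (2 * α) - |(n₃ : ℝ)| ^ (2 * α)

/-- `(n₁,n₂,n₃) ∈ Γ_n^N`: `n₁ - n₂ + n₃ = n`, `|n₂-n₁| > |n₂|^{1-α}` and `|n₂-n₃| > |n₂|^{1-α}`. -/
noncomputable def GammaN (α : ℝ) (n n₁ n₂ n₃ : ℤ) : Prop :=
  n₁ - n₂ + n₃ = n ∧ (|n₂ - n₁| : ℝ) > |(n₂ : ℝ)| ^ (1 - α) ∧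
    (|n₂ - n₃| : ℝ) > |(n₂ : ℝ)| ^ (1 - α)

noncomputable def FF (α : ℝ) (m b : ℤ) : ℝ :=
  |(b : ℝ)| ^ (2 * α) + |((m - b : ℤ) : ℝ)| ^ (2 * α)

lemma aux_cs {ι : Type*} (f g : ι → ℝ≥0∞) :
    (∑' i, f i * g i) ^ 2 ≤ (∑' i, f i ^ 2) * (∑' i, g i ^ 2) := by
  have h1 : (∑' i, f i * g i) ≤ (∑' i, f i ^ 2) ^ (1/2:ℝ) * (∑' i, g i ^ 2) ^ (1/2:ℝ) := by
    rw [ENNReal.tsum_eq_iSup_sum]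
    refine iSup_le fun s => ?_
    have := ENNReal.inner_le_Lp_mul_Lq s f g (p := 2) (q := 2) ⟨by norm_num, by norm_num, by norm_num⟩
    refine this.trans ?_
    simp only [ENNReal.rpow_ofNat]
    gcongr <;> exact ENNReal.sum_le_tsum s
  calc _ ≤ ((∑' i, f i ^ 2) ^ (1/2:ℝ) * (∑' i, g i ^ 2) ^ (1/2:ℝ)) ^ 2 := by gcongr
    _ = _ := by
      rw [mul_pow, ← ENNReal.rpow_natCast, ← ENNReal.rpow_natCast, ← ENNReal.rpow_mul, ← ENNReal.rpow_mul]
      norm_num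

/-- second difference bound -/
lemma aux_conv (p : ℝ) (hp : 1 < p) (hp2 : p < 2) (a b m : ℝ) (ha : 0 ≤ a) (hab : a < b)
    (hm : a + b < m) :
    p * (p - 1) * m ^ (p - 2) * (b - a) * (m - a - b) ≤
      (a ^ p + (m - a) ^ p) - (b ^ p + (m - b) ^ p) := by
  set d := b - a with hd
  have hd0 : 0 < d := by simp [hd, hab]
  have hp0 : 0 ≤ p := by linarith
  have hp1 : 0 ≤ p - 1 := by linarith
  have hlt : a < m - b := by linarith
  obtain ⟨c, hc, hc'⟩ := exists_hasDerivAt_eq_slope (fun x : ℝ => (x + d) ^ p - x ^ p)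
    (fun x => p * (x + d) ^ (p - 1) - p * x ^ (p - 1)) hlt
    (by
      apply Continuous.continuousOn
      exact ((Real.continuous_rpow_const hp0).comp (continuous_id.add continuous_const)).sub
        (Real.continuous_rpow_const hp0))
    (by
      intro x hx
      have h1 := (Real.hasDerivAt_rpow_const (x := x + d) (p := p) (Or.inr hp.le)).comp x
        ((hasDerivAt_id x).add_const d)
      have h2 := (Real.hasDerivAt_rpow_const (x := x) (p := p) (Or.inr hp.le))
      have h3 := h1.sub h2
      simp only [id, mul_one] at h3
      exact h3)
  have hc0 : 0 < c := lt_of_le_of_lt ha hc.1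
  obtain ⟨e, he, he'⟩ := exists_hasDerivAt_eq_slope (fun x : ℝ => x ^ (p - 1))
    (fun x => (p - 1) * x ^ (p - 1 - 1)) (show c < c + d by linarith)
    ((Real.continuous_rpow_const hp1).continuousOn)
    (by
      intro x hx
      exact Real.hasDerivAt_rpow_const (Or.inl (by linarith [hx.1])))
  have he0 : 0 < e := lt_trans hc0 he.1
  have hem : e ≤ m := by linarith [he.2, hc.2]
  have hpow : m ^ (p - 2) ≤ e ^ (p - 2) :=
    Real.rpow_le_rpow_of_nonpos he0 hem (by linarith)
  have hpp : p - 1 - 1 = p - 2 := by ring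
  rw [hpp] at he'
  have hx : (c + d) ^ (p - 1) - c ^ (p - 1) = (p - 1) * e ^ (p - 2) * d := by
    rw [he', add_sub_cancel_left, div_mul_cancel₀ _ hd0.ne']
  have hy : ((m - b + d) ^ p - (m - b) ^ p) - ((a + d) ^ p - a ^ p)
      = (p * (c + d) ^ (p - 1) - p * c ^ (p - 1)) * (m - b - a) := by
    rw [hc']; field_simp [show m - b - a ≠ 0 by linarith]
  have e1 : m - b + d = m - a := by rw [hd]; ring
  have e2 : a + d = b := by rw [hd]; ring
  rw [e1, e2] at hy
  have : (a ^ p + (m - a) ^ p) - (b ^ p + (m - b) ^ p)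
      = p * (p - 1) * e ^ (p - 2) * d * (m - a - b) := by
    have : (p * (c + d) ^ (p - 1) - p * c ^ (p - 1)) = p * ((p - 1) * e ^ (p - 2) * d) := by
      rw [← hx]; ring
    rw [this] at hy
    linarith
  rw [this]
  have : 0 ≤ m - a - b := by linarith
  gcongr

/-- a set of integers with small diameter -/
lemma aux_piece (S : Set ℤ) (D V : ℝ) (hD : 0 ≤ D) (hV : 0 ≤ V) (w : ℤ → ℝ)
    (hS : ∀ a ∈ S, ∀ b ∈ S, a < b → ((b : ℝ) - a) ≤ D) (hw : ∀ b ∈ S, w b ≤ V) :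
    ∑' b : ℤ, S.indicator (fun b => ENNReal.ofReal (w b)) b ≤ ENNReal.ofReal ((2 * D + 1) * V) := by
  rcases S.eq_empty_or_nonempty with h | ⟨a0, ha0⟩
  · simp [h]
  have hsub : ∀ b ∈ S, b ∈ Finset.Icc (a0 - ⌊D⌋) (a0 + ⌊D⌋) := by
    intro b hb
    rw [Finset.mem_Icc]
    have hf : 0 ≤ ⌊D⌋ := Int.floor_nonneg.2 hD
    rcases lt_trichotomy a0 b with h | h | h
    · have := hS a0 ha0 b hb h
      have : b - a0 ≤ ⌊D⌋ := Int.le_floor.2 (by push_cast; exact this)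
      omega
    · omega
    · have := hS b hb a0 ha0 h
      have : a0 - b ≤ ⌊D⌋ := Int.le_floor.2 (by push_cast; exact this)
      omega
  rw [tsum_eq_sum (s := Finset.Icc (a0 - ⌊D⌋) (a0 + ⌊D⌋))]
  · calc _ ≤ ∑ b ∈ Finset.Icc (a0 - ⌊D⌋) (a0 + ⌊D⌋), ENNReal.ofReal V := by
          apply Finset.sum_le_sum
          intro b _
          by_cases hb : b ∈ S
          · simpa [hb] using ENNReal.ofReal_le_ofReal (hw b hb)
          · simp [hb]
      _ = ENNReal.ofReal (((Finset.Icc (a0 - ⌊D⌋) (a0 + ⌊D⌋)).card : ℝ) * V) := by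
          rw [Finset.sum_const, nsmul_eq_mul, ENNReal.ofReal_mul (by positivity)]
          simp
      _ ≤ _ := by
          apply ENNReal.ofReal_le_ofReal
          apply mul_le_mul_of_nonneg_right _ hV
          have hf : 0 ≤ ⌊D⌋ := Int.floor_nonneg.2 hD
          have h1 : ((Finset.Icc (a0 - ⌊D⌋) (a0 + ⌊D⌋)).card : ℤ) = 2 * ⌊D⌋ + 1 := by
            rw [Int.card_Icc]; omega
          have h2 : ((Finset.Icc (a0 - ⌊D⌋) (a0 + ⌊D⌋)).card : ℝ) = 2 * (⌊D⌋ : ℝ) + 1 := by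
            exact_mod_cast h1
          rw [h2]
          linarith [Int.floor_le D]
  · intro b hb
    by_cases hb' : b ∈ S
    · exact absurd (hsub b hb') hb
    · simp [hb']

lemma jb_one (n : ℤ) : 1 ≤ jbZ n := by
  unfold jbZ
  rw [Real.one_le_sqrt]; nlinarith [sq_nonneg (n:ℝ)]

lemma jb_pos (n : ℤ) : 0 < jbZ n := lt_of_lt_of_le one_pos (jb_one n)

lemma jb_abs (n : ℤ) : |(n : ℝ)| ≤ jbZ n := by
  unfold jbZ
  apply Real.abs_le_sqrt; linarith

lemma jb_mono (n m : ℤ) (h : |n| ≤ |m|) : jbZ n ≤ jbZ m := by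
  unfold jbZ
  apply Real.sqrt_le_sqrt
  have : (n:ℝ)^2 ≤ (m:ℝ)^2 := by exact_mod_cast sq_le_sq.2 h
  linarith

lemma jb_four (n m : ℤ) (h : |m| ≤ 4 * |n|) : jbZ m ≤ 4 * jbZ n := by
  unfold jbZ
  rw [Real.sqrt_le_left (by positivity), mul_pow, Real.sq_sqrt (by positivity)]
  have : (m:ℝ)^2 ≤ (4 * n:ℝ)^2 := by
    have : m ^ 2 ≤ (4 * n) ^ 2 := sq_le_sq.2 (by rw [abs_mul]; simpa using h)
    exact_mod_cast this
  nlinarith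

lemma jb_peetre (a b : ℤ) : jbZ (a + b) ≤ 2 * (jbZ a * jbZ b) := by
  unfold jbZ
  rw [← Real.sqrt_mul (by positivity), Real.sqrt_le_left (by positivity), mul_pow,
    Real.sq_sqrt (by positivity)]
  push_cast
  nlinarith [sq_nonneg ((a:ℝ) - b), sq_nonneg ((a:ℝ) * b)]

lemma jb_neg (a : ℤ) : jbZ (-a) = jbZ a := by simp [jbZ]

lemma aux_pow_int (p : ℝ) (hp : 1 < p) (x y : ℝ) (hy : 0 ≤ y) (hxy : y + 1 ≤ x) :
    x - y ≤ x ^ p - y ^ p := by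
  have h := Real.add_rpow_le_rpow_add hy (show 0 ≤ x - y by linarith) hp.le
  have h2 : x - y ≤ (x - y) ^ p := Real.self_le_rpow_of_one_le (by linarith) hp.le
  rw [add_sub_cancel] at h
  linarith

/-- The half-line sum. -/
lemma aux_half (α : ℝ) (hα : 1/2 < α) (hα' : α < 1) :
    ∃ K : ℝ, 0 < K ∧ ∀ (m : ℤ) (t V : ℝ) (w : ℤ → ℝ), 0 ≤ m → 0 ≤ V →
      (∀ b, w b ≤ V) →
      (∀ b, |m| ≤ 4 * |b| → |m| ≤ 4 * |m - b| → |b| ≤ |m| → |m - b| ≤ |m| →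
        w b * jbZ m ^ (1 - α) ≤ V) →
      ∑' b : ℤ, {b : ℤ | 2 * b ≤ m ∧ |FF α m b - t| < 1}.indicator
        (fun b => ENNReal.ofReal (w b)) b ≤ ENNReal.ofReal (K * V) := by
  set p := 2 * α with hpdef
  have hp : 1 < p := by linarith
  have hp2 : p < 2 := by linarith
  set q := p * (p - 1) with hq
  have hq0 : 0 < q := mul_pos (by linarith) (by linarith)
  set D1 : ℝ := 4 / q with hD1
  set D2 : ℝ := Real.sqrt (2 / q) with hD2
  have hD10 : 0 ≤ D1 := by positivity
  have hD20 : 0 ≤ D2 := by positivity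
  refine ⟨(2 * 2 + 1) + (2 * D1 + 1) + (2 * D2 + 1), by positivity, ?_⟩
  intro m t V w hm hV hw1 hw2
  have hmR : (0:ℝ) ≤ m := by exact_mod_cast hm
  have hdiff : ∀ a b : ℤ, |FF α m a - t| < 1 → |FF α m b - t| < 1 →
      FF α m a - FF α m b < 2 := by
    intro a b h1 h2
    rw [abs_lt] at h1 h2
    linarith
  have hFF : ∀ b : ℤ, 0 ≤ b → b ≤ m → FF α m b = (b:ℝ) ^ p + ((m:ℝ) - b) ^ p := by
    intro b h0 h1
    have h0' : (0:ℝ) ≤ b := by exact_mod_cast h0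
    have h1' : (b:ℝ) ≤ m := by exact_mod_cast h1
    unfold FF
    push_cast
    rw [abs_of_nonneg h0', abs_of_nonneg (by linarith)]
  have hconv : ∀ a b : ℤ, 0 ≤ a → a < b → 2 * b ≤ m → |FF α m a - t| < 1 → |FF α m b - t| < 1 →
      q * (m:ℝ) ^ (p - 2) * (b - a) * (m - a - b) < 2 := by
    intro a b h0 hab hb h1 h2
    have h3 := hdiff a b h1 h2
    rw [hFF a h0 (by omega), hFF b (by omega) (by omega)] at h3
    refine lt_of_le_of_lt (aux_conv p hp hp2 a b m (by exact_mod_cast h0) (by exact_mod_cast hab)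
      (by exact_mod_cast (show a + b < m by omega))) h3
  set S := {b : ℤ | 2 * b ≤ m ∧ |FF α m b - t| < 1} with hS
  set S1 := {b : ℤ | b ≤ 0 ∧ |FF α m b - t| < 1} with hS1
  set S2 := {b : ℤ | 0 ≤ b ∧ 4 * b ≤ m ∧ |FF α m b - t| < 1} with hS2
  set S3 := {b : ℤ | 0 ≤ b ∧ m ≤ 4 * b ∧ 2 * b ≤ m ∧ |FF α m b - t| < 1} with hS3
  have hJ1 : 1 ≤ jbZ m ^ (1 - α) := Real.one_le_rpow (jb_one m) (by linarith)
  have hJ0 : 0 < jbZ m ^ (1 - α) := by linarith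
  have key1 := aux_piece S1 2 V (by norm_num) hV w (by
    rintro a ⟨ha, ha'⟩ b ⟨hb, hb'⟩ hab
    have h3 := hdiff a b ha' hb'
    have haR : (a:ℝ) ≤ 0 := by exact_mod_cast ha
    have hbR : (b:ℝ) ≤ 0 := by exact_mod_cast hb
    have habR : (a:ℝ) + 1 ≤ b := by exact_mod_cast hab
    have h4 := aux_pow_int p hp (-a) (-b) (by linarith) (by linarith)
    have h5 : ((m:ℝ) - b) ^ p ≤ ((m:ℝ) - a) ^ p :=
      Real.rpow_le_rpow (by linarith) (by linarith) (by linarith)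
    unfold FF at h3
    push_cast at h3
    rw [abs_of_nonpos haR, abs_of_nonpos hbR, abs_of_nonneg (show (0:ℝ) ≤ m - a by linarith),
      abs_of_nonneg (show (0:ℝ) ≤ m - b by linarith)] at h3
    linarith) (fun b _ => hw1 b)
  have key2 := aux_piece S2 D1 V hD10 hV w (by
    rintro a ⟨ha0, ha, ha'⟩ b ⟨hb0, hb, hb'⟩ hab
    have h3 := hconv a b ha0 hab (by omega) ha' hb'
    have haR : (0:ℝ) ≤ a := by exact_mod_cast ha0
    have habR : (a:ℝ) + 1 ≤ b := by exact_mod_cast hab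
    have hbm : 4 * (b:ℝ) ≤ m := by exact_mod_cast hb
    have hm1 : (1:ℝ) ≤ m := by linarith
    have h4 : (m:ℝ) ^ (p - 2) * m = (m:ℝ) ^ (p - 1) := by
      rw [← Real.rpow_add_one (by linarith)]; congr 1; ring
    have h5 : 1 ≤ (m:ℝ) ^ (p - 1) := Real.one_le_rpow hm1 (by linarith)
    have h6 : q * (m:ℝ) ^ (p - 2) * (b - a) * (m / 2) ≤
        q * (m:ℝ) ^ (p - 2) * (b - a) * (m - a - b) := by
      apply mul_le_mul_of_nonneg_left (by linarith)
      have : (0:ℝ) ≤ b - a := by linarith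
      positivity
    have h7 : q * (m:ℝ) ^ (p - 2) * (b - a) * (m / 2) = q * (b - a) / 2 * (m:ℝ) ^ (p - 1) := by
      rw [← h4]; ring
    have h8 : q * (b - a) / 2 ≤ q * ((b:ℝ) - a) / 2 * (m:ℝ) ^ (p - 1) := by
      apply le_mul_of_one_le_right _ h5
      have : (0:ℝ) ≤ b - a := by linarith
      positivity
    rw [hD1, le_div_iff₀ hq0]
    linarith) (fun b _ => hw1 b)
  have key3 := aux_piece S3 (D2 * jbZ m ^ (1 - α)) (V / jbZ m ^ (1 - α)) (by positivity)
    (by positivity) w (by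
    rintro a ⟨ha0, -, ha, ha'⟩ b ⟨hb0, -, hb, hb'⟩ hab
    have h3 := hconv a b ha0 hab (by omega) ha' hb'
    have haR : (0:ℝ) ≤ a := by exact_mod_cast ha0
    have habR : (a:ℝ) + 1 ≤ b := by exact_mod_cast hab
    have hbm : 2 * (b:ℝ) ≤ m := by exact_mod_cast hb
    have hm1 : (1:ℝ) ≤ m := by linarith
    have hm0 : (0:ℝ) < m := by linarith
    have h6 : q * (m:ℝ) ^ (p - 2) * (b - a) * (b - a) ≤
        q * (m:ℝ) ^ (p - 2) * (b - a) * (m - a - b) := by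
      apply mul_le_mul_of_nonneg_left (by linarith)
      have : (0:ℝ) ≤ b - a := by linarith
      positivity
    have h9 : ((m:ℝ) ^ (1 - α)) ^ 2 * (m:ℝ) ^ (p - 2) = 1 := by
      rw [← Real.rpow_natCast, ← Real.rpow_mul hm0.le, ← Real.rpow_add hm0]
      rw [show (1 - α) * ((2:ℕ):ℝ) + (p - 2) = 0 by rw [hpdef]; push_cast; ring]
      exact Real.rpow_zero _
    have h10 : ((b:ℝ) - a) ^ 2 ≤ (D2 * (m:ℝ) ^ (1 - α)) ^ 2 := by
      rw [mul_pow, hD2, Real.sq_sqrt (by positivity)]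
      have hx : (0:ℝ) < ((m:ℝ) ^ (1 - α)) ^ 2 := by positivity
      have h11 : ((m:ℝ) ^ (1 - α)) ^ 2 * (q * (m:ℝ) ^ (p - 2) * (b - a) * (b - a)) ≤
        ((m:ℝ) ^ (1 - α)) ^ 2 * 2 := mul_le_mul_of_nonneg_left (by linarith) hx.le
      have h12 : ((m:ℝ) ^ (1 - α)) ^ 2 * (q * (m:ℝ) ^ (p - 2) * (b - a) * (b - a)) =
        q * (b - a) ^ 2 := by
        calc _ = (((m:ℝ) ^ (1 - α)) ^ 2 * (m:ℝ) ^ (p - 2)) * (q * (b - a) ^ 2) := by ring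
          _ = _ := by rw [h9, one_mul]
      rw [h12] at h11
      rw [div_mul_eq_mul_div, le_div_iff₀ hq0]
      linarith
    have h13 : (b:ℝ) - a ≤ D2 * (m:ℝ) ^ (1 - α) := by
      apply le_of_sq_le_sq h10 (by positivity)
    refine h13.trans (mul_le_mul_of_nonneg_left ?_ hD20)
    apply Real.rpow_le_rpow hm0.le _ (by linarith)
    exact (le_abs_self _).trans (jb_abs m)) (by
      rintro b ⟨hb0, hb1, hb2, -⟩
      rw [le_div_iff₀ hJ0]
      apply hw2 b <;> rw [abs_of_nonneg hm] 
      · rw [abs_of_nonneg hb0]; exact hb1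
      · rw [abs_of_nonneg (by omega)]; omega
      · rw [abs_of_nonneg hb0]; omega
      · rw [abs_of_nonneg (by omega)]; omega)
  have hV3 : (2 * (D2 * jbZ m ^ (1 - α)) + 1) * (V / jbZ m ^ (1 - α)) ≤ (2 * D2 + 1) * V := by
    rw [mul_div_assoc', div_le_iff₀ hJ0]
    have : V ≤ V * jbZ m ^ (1 - α) := le_mul_of_one_le_right hV hJ1
    linarith
  have hcover : ∀ b, S.indicator (fun b => ENNReal.ofReal (w b)) b ≤
      S1.indicator (fun b => ENNReal.ofReal (w b)) b + S2.indicator (fun b => ENNReal.ofReal (w b)) b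
      + S3.indicator (fun b => ENNReal.ofReal (w b)) b := by
    intro b
    by_cases hb : b ∈ S
    · rw [Set.indicator_of_mem hb]
      obtain ⟨h1, h2⟩ := hb
      by_cases c1 : b ≤ 0
      · rw [Set.indicator_of_mem (show b ∈ S1 from ⟨c1, h2⟩), add_assoc]
        exact le_self_add
      by_cases c2 : 4 * b ≤ m
      · rw [Set.indicator_of_mem (show b ∈ S2 from ⟨by omega, c2, h2⟩), add_right_comm]
        exact le_add_self
      · rw [Set.indicator_of_mem (show b ∈ S3 from ⟨by omega, by omega, h1, h2⟩)]
        exact le_add_self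
    · rw [Set.indicator_of_notMem hb]; exact zero_le
  calc _ ≤ _ := ENNReal.tsum_le_tsum hcover
    _ ≤ ENNReal.ofReal ((2 * 2 + 1) * V) + ENNReal.ofReal ((2 * D1 + 1) * V)
        + ENNReal.ofReal ((2 * D2 + 1) * V) := by
      rw [ENNReal.tsum_add, ENNReal.tsum_add]
      exact add_le_add (add_le_add key1 key2) (key3.trans (ENNReal.ofReal_le_ofReal hV3))
    _ = _ := by
      rw [← ENNReal.ofReal_add (by positivity) (by positivity),
        ← ENNReal.ofReal_add (by positivity) (by positivity)]
      congr 1; ring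

lemma aux_nonneg_m (α : ℝ) (hα : 1/2 < α) (hα' : α < 1) :
    ∃ K : ℝ, 0 < K ∧ ∀ (m : ℤ) (t V : ℝ) (w : ℤ → ℝ), 0 ≤ m → 0 ≤ V →
      (∀ b, w b ≤ V) →
      (∀ b, |m| ≤ 4 * |b| → |m| ≤ 4 * |m - b| → |b| ≤ |m| → |m - b| ≤ |m| →
        w b * jbZ m ^ (1 - α) ≤ V) →
      ∑' b : ℤ, {b : ℤ | |FF α m b - t| < 1}.indicator
        (fun b => ENNReal.ofReal (w b)) b ≤ ENNReal.ofReal (K * V) := by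
  obtain ⟨K, hK, h⟩ := aux_half α hα hα'
  refine ⟨K + K, by positivity, ?_⟩
  intro m t V w hm hV hw1 hw2
  have h1 := h m t V w hm hV hw1 hw2
  have h2 := h m t V (fun b => w (m - b)) hm hV (fun b => hw1 _) (by
    intro b c1 c2 c3 c4
    apply hw2 (m - b) c2 _ c4 <;> simpa)
  rw [← (Equiv.subLeft m).tsum_eq] at h2
  rw [add_mul, ENNReal.ofReal_add (by positivity) (by positivity)]
  refine le_trans ?_ (add_le_add h1 h2)
  rw [← ENNReal.tsum_add]
  apply ENNReal.tsum_le_tsum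
  intro b
  by_cases hb : |FF α m b - t| < 1
  · rw [Set.indicator_of_mem (show b ∈ {b : ℤ | |FF α m b - t| < 1} from hb)]
    by_cases c : 2 * b ≤ m
    · rw [Set.indicator_of_mem (show b ∈ {b : ℤ | 2 * b ≤ m ∧ |FF α m b - t| < 1} from ⟨c, hb⟩)]
      exact le_self_add
    · have hs : FF α m (m - b) = FF α m b := by
        unfold FF
        rw [sub_sub_cancel, add_comm]
      have : (Equiv.subLeft m) b ∈ {b : ℤ | 2 * b ≤ m ∧ |FF α m b - t| < 1} := by
        refine ⟨?_, ?_⟩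
        · simp only [Equiv.subLeft_apply]; omega
        · simp only [Equiv.subLeft_apply]; rw [hs]; exact hb
      rw [Set.indicator_of_mem this]
      simp
  · rw [Set.indicator_of_notMem (show b ∉ {b : ℤ | |FF α m b - t| < 1} from hb)]; exact zero_le

lemma aux_count (α : ℝ) (hα : 1/2 < α) (hα' : α < 1) :
    ∃ K : ℝ, 0 < K ∧ ∀ (m : ℤ) (t V : ℝ) (w : ℤ → ℝ), 0 ≤ V →
      (∀ b, w b ≤ V) →
      (∀ b, |m| ≤ 4 * |b| → |m| ≤ 4 * |m - b| → |b| ≤ |m| → |m - b| ≤ |m| →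
        w b * jbZ m ^ (1 - α) ≤ V) →
      ∑' b : ℤ, {b : ℤ | |FF α m b - t| < 1}.indicator
        (fun b => ENNReal.ofReal (w b)) b ≤ ENNReal.ofReal (K * V) := by
  obtain ⟨K, hK, h⟩ := aux_nonneg_m α hα hα'
  refine ⟨K, hK, ?_⟩
  intro m t V w hV hw1 hw2
  rcases le_total 0 m with hm | hm
  · exact h m t V w hm hV hw1 hw2
  have h2 := h (-m) t V (fun b => w (-b)) (by omega) hV (fun b => hw1 _) (by
    intro b c1 c2 c3 c4
    rw [show -m - b = -(m - -b) by ring] at c2 c4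
    rw [abs_neg] at c1 c2 c3 c4
    rw [abs_neg] at c2 c4
    rw [jb_neg]
    apply hw2 (-b) _ c2 _ c4 <;> simpa)
  rw [← (Equiv.neg ℤ).tsum_eq] at h2
  refine le_trans (le_of_eq ?_) h2
  apply tsum_congr
  intro b
  have hs : FF α (-m) (-b) = FF α m b := by
    unfold FF
    rw [show -m - -b = -(m - b) by ring]
    push_cast
    rw [abs_neg, abs_neg]
  have : (Equiv.neg ℤ) b ∈ {b : ℤ | |FF α (-m) b - t| < 1} ↔ b ∈ {b : ℤ | |FF α m b - t| < 1} := by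
    simp [hs]
  by_cases hb : b ∈ {b : ℤ | |FF α m b - t| < 1}
  · rw [Set.indicator_of_mem hb, Set.indicator_of_mem (this.2 hb)]; simp
  · rw [Set.indicator_of_notMem hb, Set.indicator_of_notMem (fun h => hb (this.1 h))]

lemma aux_A (α : ℝ) (hα : 1/2 < α) (hα' : α < 1) (σ : ℝ) (hσ : 1 - α ≤ σ) :
    ∃ K : ℝ, 0 < K ∧ ∀ (m : ℤ) (t : ℝ),
      ∑' b : ℤ, {b : ℤ | |FF α m b - t| < 1}.indicator
        (fun b => ENNReal.ofReal (jbZ b ^ (-σ) * jbZ (m - b) ^ (-σ))) b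
        ≤ ENNReal.ofReal (K * jbZ m ^ (-σ)) := by
  obtain ⟨K, hK, h⟩ := aux_count α hα hα'
  have hσ0 : 0 < σ := by linarith
  refine ⟨K * 16 ^ σ, by positivity, ?_⟩
  intro m t
  rw [mul_assoc]
  have hpm := jb_pos m
  refine h m t (16 ^ σ * jbZ m ^ (-σ)) _ (by positivity) ?_ ?_
  · intro b
    have hpb := jb_pos b
    have hpc := jb_pos (m - b)
    have h1 : jbZ m ≤ 16 * (jbZ b * jbZ (m - b)) := by
      have := jb_peetre b (m - b)
      rw [add_sub_cancel] at this
      have h3 : 0 < jbZ b * jbZ (m - b) := by positivity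
      linarith
    have h2 := Real.rpow_le_rpow hpm.le h1 hσ0.le
    rw [Real.mul_rpow (by positivity) (by positivity), Real.mul_rpow hpb.le hpc.le] at h2
    rw [Real.rpow_neg hpb.le, Real.rpow_neg hpc.le, Real.rpow_neg hpm.le, ← mul_inv,
      ← div_eq_mul_inv, inv_le_comm₀ (by positivity) (by positivity), inv_div,
      div_le_iff₀ (by positivity)]
    linarith
  · intro b c1 c2 c3 c4
    have hpb := jb_pos b
    have hpc := jb_pos (m - b)
    have h1 := jb_four b m c1
    have h2 := jb_four (m - b) m c2
    have h3 : jbZ m * jbZ m ≤ 16 * (jbZ b * jbZ (m - b)) := by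
      have := mul_le_mul h1 h2 hpm.le (by positivity)
      linarith
    have h4 := Real.rpow_le_rpow (by positivity) h3 hσ0.le
    rw [Real.mul_rpow hpm.le hpm.le, Real.mul_rpow (by norm_num) (by positivity),
      Real.mul_rpow hpb.le hpc.le] at h4
    have h5 : jbZ m ^ (1 - α) ≤ jbZ m ^ σ := Real.rpow_le_rpow_of_exponent_le (jb_one m) hσ
    rw [Real.rpow_neg hpb.le, Real.rpow_neg hpc.le, Real.rpow_neg hpm.le, ← mul_inv,
      ← div_eq_mul_inv, inv_mul_eq_div, div_le_div_iff₀ (by positivity) (by positivity)]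
    have h6 : jbZ m ^ (1 - α) * jbZ m ^ σ ≤ jbZ m ^ σ * jbZ m ^ σ := by gcongr
    linarith

lemma aux_B (α : ℝ) (hα : 1/2 < α) (hα' : α < 1) (σ : ℝ) (hσ : 1 - α ≤ σ) :
    ∃ K : ℝ, 0 < K ∧ ∀ (m : ℤ) (t : ℝ),
      ∑' b : ℤ, {b : ℤ | |FF α m b - t| < 1}.indicator
        (fun b => ENNReal.ofReal (jbZ b ^ σ * jbZ (m - b) ^ (-σ))) b
        ≤ ENNReal.ofReal (K * jbZ m ^ σ) := by
  obtain ⟨K, hK, h⟩ := aux_count α hα hα'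
  have hσ0 : 0 < σ := by linarith
  refine ⟨K * 4 ^ σ, by positivity, ?_⟩
  intro m t
  rw [mul_assoc]
  have hpm := jb_pos m
  refine h m t (4 ^ σ * jbZ m ^ σ) _ (by positivity) ?_ ?_
  · intro b
    have hpb := jb_pos b
    have hpc := jb_pos (m - b)
    have h1 : jbZ b ≤ 4 * (jbZ m * jbZ (m - b)) := by
      have := jb_peetre m (-(m - b))
      rw [← sub_eq_add_neg, sub_sub_cancel, jb_neg] at this
      have h3 : 0 < jbZ m * jbZ (m - b) := by positivity
      linarith
    have h2 := Real.rpow_le_rpow hpb.le h1 hσ0.le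
    rw [Real.mul_rpow (by positivity) (by positivity), Real.mul_rpow hpm.le hpc.le] at h2
    rw [Real.rpow_neg hpc.le, ← div_eq_mul_inv, div_le_iff₀ (by positivity)]
    linarith
  · intro b c1 c2 c3 c4
    have hpb := jb_pos b
    have hpc := jb_pos (m - b)
    have h1 := jb_mono b m c3
    have h2 := jb_four (m - b) m c2
    have h3 := h1.trans h2
    have h4 := Real.rpow_le_rpow (by positivity) h3 hσ0.le
    rw [Real.mul_rpow (by positivity) (by positivity)] at h4
    have h5 : jbZ m ^ (1 - α) ≤ jbZ m ^ σ := Real.rpow_le_rpow_of_exponent_le (jb_one m) hσ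
    apply mul_le_mul _ h5 (by positivity) (by positivity)
    rw [Real.rpow_neg hpc.le, ← div_eq_mul_inv, div_le_iff₀ (by positivity)]
    exact h4

noncomputable def chi (α : ℝ) (μ : ℤ) (n m b : ℤ) : ℝ≥0∞ :=
  Set.indicator {b : ℤ | |FF α m n - FF α m b - μ| < 1} (fun _ => 1) b

lemma chi_sq (α : ℝ) (μ : ℤ) (n m b : ℤ) : chi α μ n m b ^ 2 = chi α μ n m b := by
  unfold chi Set.indicator
  split_ifs <;> simp

lemma aux_reindex (α : ℝ) (μ n : ℤ) (ω₁ ω₂ ω₃ : ℤ → ℝ≥0) :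
    (∑' p : {q : ℤ × ℤ × ℤ // GammaN α n q.1 q.2.1 q.2.2 ∧
                |PhiFrac α n q.1 q.2.1 q.2.2 - (μ : ℝ)| < 1},
              ((ω₁ p.1.1 : ℝ≥0∞) * (ω₂ p.1.2.1 : ℝ≥0∞) * (ω₃ p.1.2.2 : ℝ≥0∞)))
    ≤ ∑' x : ℤ × ℤ, chi α μ n x.1 x.2 *
        ((ω₁ x.2 : ℝ≥0∞) * (ω₂ (x.1 - n) : ℝ≥0∞) * (ω₃ (x.1 - x.2) : ℝ≥0∞)) := by
  let e : {q : ℤ × ℤ × ℤ // GammaN α n q.1 q.2.1 q.2.2 ∧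
      |PhiFrac α n q.1 q.2.1 q.2.2 - (μ : ℝ)| < 1} → ℤ × ℤ := fun p => (n + p.1.2.1, p.1.1)
  have he : Function.Injective e := by
    rintro ⟨⟨a, b, c⟩, ⟨h1, _⟩, _⟩ ⟨⟨a', b', c'⟩, ⟨h1', _⟩, _⟩ h
    simp only [e, Prod.mk.injEq] at h
    obtain ⟨h2, h3⟩ := h
    simp only [Subtype.mk.injEq, Prod.mk.injEq]
    simp only at h1 h1'
    omega
  refine le_trans (le_of_eq ?_) (ENNReal.tsum_comp_le_tsum_of_injective he _)
  apply tsum_congr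
  rintro ⟨⟨a, b, c⟩, ⟨h1, -⟩, h2⟩
  simp only [e]
  simp only at h1 h2
  have hc : n + b - a = c := by omega
  have hb : n + b - n = b := by omega
  have hchi : chi α μ n (n + b) a = 1 := by
    unfold chi
    rw [Set.indicator_of_mem]
    simp only [Set.mem_ofPred_eq]
    unfold FF
    rw [hc, hb]
    unfold PhiFrac at h2
    rw [show ∀ x y z w u : ℝ, x + y - (z + w) - u = x - z + y - w - u by intros; ring]
    exact h2
  rw [hchi, hc, hb, one_mul]

noncomputable def JJ (s : ℝ) (n : ℤ) : ℝ≥0∞ := ENNReal.ofReal (jbZ n ^ s)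

lemma JJ_mul (s t : ℝ) (n : ℤ) : JJ s n * JJ t n = JJ (s + t) n := by
  unfold JJ
  rw [← ENNReal.ofReal_mul (Real.rpow_nonneg (jb_pos n).le _), Real.rpow_add (jb_pos n)]

lemma JJ_neg (s : ℝ) (n : ℤ) : JJ s n * JJ (-s) n = 1 := by
  rw [JJ_mul]; simp [JJ]

lemma JJ_sq (s : ℝ) (n : ℤ) : JJ s n ^ 2 = JJ (2 * s) n := by
  rw [sq, JJ_mul, two_mul]

lemma JJ_negsq (s : ℝ) (n : ℤ) : JJ (-s) n ^ 2 = JJ (-(2 * s)) n := by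
  rw [JJ_sq]; congr 1; ring

lemma aux_chiA (α : ℝ) (hα : 1/2 < α) (hα' : α < 1) (σ : ℝ) (hσ : 1 - α ≤ σ) :
    ∃ K : ℝ, 0 < K ∧ ∀ (μ n m : ℤ),
      JJ σ m * ∑' b : ℤ, chi α μ n m b * (JJ (-σ) b * JJ (-σ) (m - b)) ≤ ENNReal.ofReal K := by
  obtain ⟨K, hK, h⟩ := aux_A α hα hα' σ hσ
  refine ⟨K, hK, ?_⟩
  intro μ n m
  have h1 : ∑' b : ℤ, chi α μ n m b * (JJ (-σ) b * JJ (-σ) (m - b)) ≤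
      ENNReal.ofReal K * JJ (-σ) m := by
    unfold JJ
    rw [← ENNReal.ofReal_mul hK.le]
    refine le_trans (le_of_eq ?_) (h m (FF α m n - μ))
    apply tsum_congr
    intro b
    rw [← ENNReal.ofReal_mul (Real.rpow_nonneg (jb_pos b).le _)]
    unfold chi Set.indicator
    have : |FF α m n - FF α m b - μ| = |FF α m b - (FF α m n - μ)| := by
      rw [abs_sub_comm (FF α m b)]; congr 1; ring
    simp only [Set.mem_ofPred_eq, this]
    split_ifs <;> simp
  calc _ ≤ JJ σ m * (ENNReal.ofReal K * JJ (-σ) m) := by gcongr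
    _ = ENNReal.ofReal K * (JJ σ m * JJ (-σ) m) := by ring
    _ = _ := by rw [JJ_neg, mul_one]

lemma aux_chiB (α : ℝ) (hα : 1/2 < α) (hα' : α < 1) (σ : ℝ) (hσ : 1 - α ≤ σ) :
    ∃ K : ℝ, 0 < K ∧ ∀ (μ b m : ℤ),
      JJ (-σ) m * ∑' n : ℤ, chi α μ n m b * (JJ σ n * JJ (-σ) (m - n)) ≤ ENNReal.ofReal K := by
  obtain ⟨K, hK, h⟩ := aux_B α hα hα' σ hσ
  refine ⟨K, hK, ?_⟩
  intro μ b m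
  have h1 : ∑' n : ℤ, chi α μ n m b * (JJ σ n * JJ (-σ) (m - n)) ≤
      ENNReal.ofReal K * JJ σ m := by
    unfold JJ
    rw [← ENNReal.ofReal_mul hK.le]
    refine le_trans (le_of_eq ?_) (h m (FF α m b + μ))
    apply tsum_congr
    intro n
    rw [← ENNReal.ofReal_mul (Real.rpow_nonneg (jb_pos n).le _)]
    unfold chi Set.indicator
    have : |FF α m n - FF α m b - μ| = |FF α m n - (FF α m b + μ)| := by
      congr 1; ring
    simp only [Set.mem_ofPred_eq, this]
    split_ifs <;> simp
  calc _ ≤ JJ (-σ) m * (ENNReal.ofReal K * JJ σ m) := by gcongr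
    _ = ENNReal.ofReal K * (JJ σ m * JJ (-σ) m) := by ring
    _ = _ := by rw [JJ_neg, mul_one]

lemma aux_main (α : ℝ) (hα : 1/2 < α) (hα' : α < 1) (s : ℝ) (hs : (1 - α) / 2 < s) :
    ∃ K : ℝ, 0 < K ∧ ∀ (μ : ℤ) (ω₁ ω₂ ω₃ : ℤ → ℝ≥0∞),
      ∑' n : ℤ, JJ (2 * s) n * (∑' x : ℤ × ℤ, chi α μ n x.1 x.2 *
        (ω₁ x.2 * ω₂ (x.1 - n) * ω₃ (x.1 - x.2))) ^ 2 ≤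
      ENNReal.ofReal K * ((∑' n, JJ (2 * s) n * ω₁ n ^ 2) * (∑' n, JJ (2 * s) n * ω₂ n ^ 2)
        * (∑' n, JJ (2 * s) n * ω₃ n ^ 2)) := by
  obtain ⟨A, hA, hAA⟩ := aux_chiA α hα hα' (2 * s) (by linarith)
  obtain ⟨B, hB, hBB⟩ := aux_chiB α hα hα' (2 * s) (by linarith)
  refine ⟨A * B, by positivity, ?_⟩
  intro μ ω₁ ω₂ ω₃
  set X₁ : ℤ → ℝ≥0∞ := fun n => JJ (2 * s) n * ω₁ n ^ 2 with hX₁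
  set X₂ : ℤ → ℝ≥0∞ := fun n => JJ (2 * s) n * ω₂ n ^ 2 with hX₂
  set X₃ : ℤ → ℝ≥0∞ := fun n => JJ (2 * s) n * ω₃ n ^ 2 with hX₃
  have hshift : ∀ (X : ℤ → ℝ≥0∞) (c : ℤ), ∑' m, X (m - c) = ∑' m, X m :=
    fun X c => (Equiv.subRight c).tsum_eq X
  have hCS : ∀ n, (∑' x : ℤ × ℤ, chi α μ n x.1 x.2 *
        (ω₁ x.2 * ω₂ (x.1 - n) * ω₃ (x.1 - x.2))) ^ 2 ≤
      (ENNReal.ofReal A * ∑' m, X₂ m) *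
      ∑' m, ∑' b, chi α μ n m b * (X₁ b * X₃ (m - b) * (JJ (-(2 * s)) (m - n) * JJ (-(2 * s)) m)) := by
    intro n
    have h0 : ∀ x : ℤ × ℤ, chi α μ n x.1 x.2 * (ω₁ x.2 * ω₂ (x.1 - n) * ω₃ (x.1 - x.2)) =
      (chi α μ n x.1 x.2 * (ω₂ (x.1 - n) * JJ s (x.1 - n) * JJ (-s) x.2 * JJ (-s) (x.1 - x.2)
          * JJ s x.1)) *
      (chi α μ n x.1 x.2 * (ω₁ x.2 * JJ s x.2 * (ω₃ (x.1 - x.2) * JJ s (x.1 - x.2)) *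
          JJ (-s) (x.1 - n) * JJ (-s) x.1)) := by
      intro x
      calc _ = chi α μ n x.1 x.2 ^ 2 * (ω₁ x.2 * ω₂ (x.1 - n) * ω₃ (x.1 - x.2)) *
            ((JJ s (x.1 - n) * JJ (-s) (x.1 - n)) * (JJ s x.2 * JJ (-s) x.2) *
            (JJ s (x.1 - x.2) * JJ (-s) (x.1 - x.2)) * (JJ s x.1 * JJ (-s) x.1)) := by
            rw [chi_sq]; simp only [JJ_neg, mul_one]
        _ = _ := by ring
    rw [tsum_congr h0]
    refine (aux_cs _ _).trans (mul_le_mul' ?_ ?_)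
    · rw [ENNReal.tsum_prod', ← hshift X₂ n, ← ENNReal.tsum_mul_left]
      apply ENNReal.tsum_le_tsum
      intro m
      calc _ = ∑' b, X₂ (m - n) * (JJ (2 * s) m *
              (chi α μ n m b * (JJ (-(2 * s)) b * JJ (-(2 * s)) (m - b)))) := by
            apply tsum_congr
            intro b
            simp only [mul_pow, chi_sq, JJ_sq, JJ_negsq, hX₂]
            rw [show 2 * -s = -(2 * s) by ring]
            ring
        _ = X₂ (m - n) * (JJ (2 * s) m * ∑' b, 
              (chi α μ n m b * (JJ (-(2 * s)) b * JJ (-(2 * s)) (m - b)))) := by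
            rw [ENNReal.tsum_mul_left, ENNReal.tsum_mul_left]
        _ ≤ X₂ (m - n) * ENNReal.ofReal A := by gcongr; exact hAA μ n m
        _ = _ := mul_comm _ _
    · rw [ENNReal.tsum_prod']
      apply ENNReal.tsum_le_tsum
      intro m
      apply ENNReal.tsum_le_tsum
      intro b
      apply le_of_eq
      simp only [mul_pow, chi_sq, JJ_sq, hX₁, hX₃]
      rw [show 2 * -s = -(2 * s) by ring]
      ring
  calc _ ≤ ∑' n, (ENNReal.ofReal A * ∑' m, X₂ m) * (∑' m, ∑' b, X₁ b * X₃ (m - b) *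
        (JJ (-(2 * s)) m * (chi α μ n m b * (JJ (2 * s) n * JJ (-(2 * s)) (m - n))))) := by
        apply ENNReal.tsum_le_tsum
        intro n
        refine (mul_le_mul_right (hCS n) (JJ (2 * s) n)).trans (le_of_eq ?_)
        rw [mul_left_comm]
        congr 1
        rw [← ENNReal.tsum_mul_left]
        apply tsum_congr
        intro m
        rw [← ENNReal.tsum_mul_left]
        apply tsum_congr
        intro b
        ring
    _ = (ENNReal.ofReal A * ∑' m, X₂ m) * ∑' m, ∑' b, X₁ b * X₃ (m - b) *
        (JJ (-(2 * s)) m * ∑' n, chi α μ n m b * (JJ (2 * s) n * JJ (-(2 * s)) (m - n))) := by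
        rw [ENNReal.tsum_mul_left, ENNReal.tsum_comm]
        congr 1
        apply tsum_congr
        intro m
        rw [ENNReal.tsum_comm]
        apply tsum_congr
        intro b
        rw [ENNReal.tsum_mul_left, ENNReal.tsum_mul_left]
    _ ≤ (ENNReal.ofReal A * ∑' m, X₂ m) * ∑' m, ∑' b, X₁ b * X₃ (m - b) * ENNReal.ofReal B := by
        refine mul_le_mul_right ?_ _
        apply ENNReal.tsum_le_tsum
        intro m
        apply ENNReal.tsum_le_tsum
        intro b
        exact mul_le_mul_right (hBB μ b m) _
    _ = (ENNReal.ofReal A * ∑' m, X₂ m) * ((∑' b, X₁ b) * (∑' m, X₃ m) * ENNReal.ofReal B) := by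
        congr 1
        rw [ENNReal.tsum_comm, ← ENNReal.tsum_mul_right, ← ENNReal.tsum_mul_right]
        apply tsum_congr
        intro b
        rw [ENNReal.tsum_mul_right, ENNReal.tsum_mul_left, hshift]
    _ = _ := by
        rw [ENNReal.ofReal_mul hA.le]; ring

/-- The estimate (B1) for the cubic fractional NLS: for `1/2 < α < 1` and
`s₁ > (1-α)/2`, the `ℓ²_{s₁}` norm of the trilinear form restricted to `Γ_n^N ∩ {|Φ-μ|<1}`
is bounded by `C ∏_j ‖ω⁽ʲ⁾‖_{ℓ²_{s₁}}`, uniformly in `μ ∈ ℤ`. -/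
theorem fractional_NLS_B1 (α : ℝ) (hα : 1/2 < α) (hα' : α < 1)
    (s₁ : ℝ) (hs₁ : (1 - α) / 2 < s₁) :
    ∃ C : ℝ, 0 < C ∧
      ∀ (μ : ℤ) (ω₁ ω₂ ω₃ : ℤ → ℝ≥0),
        (∑' n : ℤ, ENNReal.ofReal (jbZ n ^ (2 * s₁)) *
            (∑' p : {q : ℤ × ℤ × ℤ // GammaN α n q.1 q.2.1 q.2.2 ∧
                |PhiFrac α n q.1 q.2.1 q.2.2 - (μ : ℝ)| < 1},
              ((ω₁ p.1.1 : ℝ≥0∞) * (ω₂ p.1.2.1 : ℝ≥0∞) * (ω₃ p.1.2.2 : ℝ≥0∞))) ^ 2) ^ (1/2 : ℝ)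
          ≤ ENNReal.ofReal C * (l2sZ s₁ ω₁ * l2sZ s₁ ω₂ * l2sZ s₁ ω₃) := by
  obtain ⟨K, hK, h⟩ := aux_main α hα hα' s₁ hs₁
  refine ⟨K ^ (1/2 : ℝ), by positivity, ?_⟩
  intro μ ω₁ ω₂ ω₃
  unfold l2sZ
  rw [← ENNReal.ofReal_rpow_of_pos hK, ← ENNReal.mul_rpow_of_nonneg _ _ (by norm_num),
    ← ENNReal.mul_rpow_of_nonneg _ _ (by norm_num), ← ENNReal.mul_rpow_of_nonneg _ _ (by norm_num)]
  apply ENNReal.rpow_le_rpow _ (by norm_num)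
  refine le_trans ?_ (h μ (fun n => ω₁ n) (fun n => ω₂ n) (fun n => ω₃ n))
  apply ENNReal.tsum_le_tsum
  intro n
  have := aux_reindex α μ n ω₁ ω₂ ω₃
  unfold JJ
  gcongr
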